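/- Let f(X) = a₀ + a₁X + ⋯ + a_tX^t ∈ ℤ[X] and let F : ℤ₂ → ℤ₂ denote the induced evaluation map on the ring ℤ₂ of 2-adic integers. Then the dynamical system (ℤ₂, F) is minimal — i.e., for every z ∈ ℤ₂ the forward orbit {F^[k](z) : k ≥ 0} is dense in ℤ₂ — if and only if: (i) a₀ ≡ 1 (mod 2); (ii) a₁ ≡ 1 (mod 2); (iii) a₃ + a₅ + a₇ + ⋯ ≡ 2a₂ (mod 4); (iv) a₄ + a₆ + a₈ + ⋯ ≡ a₁ + a₂ − 1 (mod 4). -/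

import Mathlib

open Polynomial

/-- The sum of the odd-indexed coefficients `a₃ + a₅ + a₇ + ⋯` of `f`. -/
noncomputable def oddCoeffSum (f : ℤ[X]) : ℤ :=
  ∑ i ∈ (Finset.range (f.natDegree + 1)).filter (fun i => Odd i ∧ 3 ≤ i), f.coeff i

/-- The sum of the even-indexed coefficients `a₄ + a₆ + a₈ + ⋯` of `f` with index ≥ 4. -/
noncomputable def evenCoeffSumFour (f : ℤ[X]) : ℤ :=
  ∑ i ∈ (Finset.range (f.natDegree + 1)).filter (fun i => Even i ∧ 4 ≤ i), f.coeff i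

/-!
An orbit of `F` is dense iff it meets every class modulo `2 ^ n`, so `F` is minimal iff it permutes
`ℤ/2ⁿ` in a single cycle for every `n`. Comparing consecutive levels, this says that `F^[2 ^ n] 0`
has valuation exactly `n` for every `n`. With `g = F^[2 ^ n]`, Taylor expansion gives
`g (g 0) = g 0 * (1 + g' 0 + k * g 0)`, where the last factor is `2` modulo `4` as soon as
`4 ∣ g 0` and `g' 0 ≡ 1 (mod 4)`. Since `g''` is even, the congruence on `g' 0` holds from
`n = 2` on, so the valuation then grows by one at each doubling and only `F 0`, `F^[2] 0` and
`F^[4] 0` remain to be examined. They are computed modulo `8`, where `x ^ 3 = 0` for even `x` and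
`x ^ 2 = 1` for odd `x`.
-/

open Function

section FinitePeriod

variable {α : Type*} {g : α → α}

lemma injective_iterate_fin_minimalPeriod (g : α → α) (a : α) :
    Injective fun k : Fin (minimalPeriod g a) => g^[k] a := fun i j hij =>
  Fin.ext <| (iterate_eq_iterate_iff_of_lt_minimalPeriod i.2 j.2).1 hij

lemma minimalPeriod_eq_card_of_forall_surjective_iterate
    (h : ∀ x, Surjective fun k : ℕ => g^[k] x) (a : α) : minimalPeriod g a = Nat.card α := by
  obtain ⟨k, hk⟩ := h (g a) a
  have hpos : 0 < minimalPeriod g a := IsPeriodicPt.minimalPeriod_pos k.succ_pos hk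
  have hsurj : Surjective fun i : Fin (minimalPeriod g a) => g^[i] a := fun y => by
    obtain ⟨i, hi⟩ := h a y
    exact ⟨⟨i % minimalPeriod g a, Nat.mod_lt _ hpos⟩, iterate_mod_minimalPeriod_eq.trans hi⟩
  simpa using Nat.card_eq_of_bijective _ ⟨injective_iterate_fin_minimalPeriod g a, hsurj⟩

lemma surjective_iterate_of_minimalPeriod_eq_card [Finite α] {a : α}
    (h : minimalPeriod g a = Nat.card α) (x : α) : Surjective fun k : ℕ => g^[k] x := by
  have hsurj : Surjective fun i : Fin (minimalPeriod g a) => g^[i] a :=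
    ((injective_iterate_fin_minimalPeriod g a).bijective_of_nat_card_le (by simp [h])).2
  intro y
  obtain ⟨j, rfl⟩ := hsurj x
  obtain ⟨i, rfl⟩ := hsurj y
  refine ⟨i + (minimalPeriod g a - j), ?_⟩
  simp only
  rw [← iterate_add_apply, add_assoc, Nat.sub_add_cancel j.2.le, iterate_add_minimalPeriod_eq]

end FinitePeriod

section PadicDynamics

variable {p : ℕ} [Fact p.Prime]

lemma norm_sub_le_pow_iff_toZModPow_eq {x y : ℤ_[p]} {n : ℕ} :
    ‖x - y‖ ≤ (p : ℝ) ^ (-n : ℤ) ↔ PadicInt.toZModPow n x = PadicInt.toZModPow n y := by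
  rw [PadicInt.norm_le_pow_iff_mem_span_pow, ← PadicInt.ker_toZModPow, RingHom.mem_ker, map_sub,
    sub_eq_zero]

lemma denseRange_iff_forall_surjective_toZModPow {ι : Type*} {u : ι → ℤ_[p]} :
    DenseRange u ↔ ∀ n, Surjective fun i => PadicInt.toZModPow n (u i) := by
  rw [Metric.denseRange_iff]
  refine ⟨fun h n a => ?_, fun h x r hr => ?_⟩
  · obtain ⟨x, rfl⟩ := ZMod.ringHom_surjective (PadicInt.toZModPow n : ℤ_[p] →+* _) a
    have hp : (0 : ℝ) < p := mod_cast (Fact.out : p.Prime).pos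
    obtain ⟨i, hi⟩ := h x _ (zpow_pos hp (-n : ℤ))
    exact ⟨i, (norm_sub_le_pow_iff_toZModPow_eq.1 (dist_eq_norm x (u i) ▸ hi.le)).symm⟩
  · obtain ⟨n, hn⟩ := PadicInt.exists_pow_neg_lt p hr
    obtain ⟨i, hi⟩ := h n (PadicInt.toZModPow n x)
    exact ⟨i, (dist_eq_norm x (u i) ▸ norm_sub_le_pow_iff_toZModPow_eq.2 hi.symm).trans_lt hn⟩

variable {T : ℤ_[p] → ℤ_[p]} {t : ∀ n, ZMod (p ^ n) → ZMod (p ^ n)}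

lemma forall_denseRange_iterate_iff_minimalPeriod
    (hT : ∀ n, Semiconj (PadicInt.toZModPow n) T (t n)) :
    (∀ z, DenseRange fun k : ℕ => T^[k] z) ↔ ∀ n, minimalPeriod (t n) 0 = p ^ n := by
  have hsurj : (∀ z, DenseRange fun k : ℕ => T^[k] z) ↔
      ∀ n x, Surjective fun k : ℕ => (t n)^[k] x := by
    simp only [denseRange_iff_forall_surjective_toZModPow, ((hT _).iterate_right _).eq]
    rw [forall_comm]
    exact forall_congr' fun n => (ZMod.ringHom_surjective (PadicInt.toZModPow (p := p) n)).forall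
      (p := fun x => Surjective fun k : ℕ => (t n)^[k] x) |>.symm
  rw [hsurj]
  refine forall_congr' fun n => ?_
  have : NeZero (p ^ n) := ⟨pow_ne_zero n (Fact.out : p.Prime).ne_zero⟩
  have hcard : Nat.card (ZMod (p ^ n)) = p ^ n := Nat.card_zmod _
  exact ⟨fun h => (minimalPeriod_eq_card_of_forall_surjective_iterate h 0).trans hcard,
    fun h => surjective_iterate_of_minimalPeriod_eq_card (h.trans hcard.symm)⟩

lemma isPeriodicPt_zero_iff_pow_dvd {n : ℕ} (hT : Semiconj (PadicInt.toZModPow n) T (t n))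
    (k : ℕ) : IsPeriodicPt (t n) k 0 ↔ (p : ℤ_[p]) ^ n ∣ T^[k] 0 := by
  rw [← Ideal.mem_span_singleton, ← PadicInt.ker_toZModPow, RingHom.mem_ker,
    (hT.iterate_right k).eq, map_zero]
  rfl

lemma forall_minimalPeriod_iff_emultiplicity
    (hT : ∀ n, Semiconj (PadicInt.toZModPow n) T (t n)) :
    (∀ n, minimalPeriod (t n) 0 = p ^ n) ↔
      ∀ n : ℕ, emultiplicity (p : ℤ_[p]) (T^[p ^ n] 0) = n := by
  simp only [emultiplicity_eq_coe, ← isPeriodicPt_zero_iff_pow_dvd (hT _)]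
  constructor
  · intro h n
    have hper := isPeriodicPt_minimalPeriod (t n) 0
    refine ⟨by rwa [h n] at hper, fun hper => ?_⟩
    have hdvd := h (n + 1) ▸ hper.minimalPeriod_dvd
    have := (Nat.pow_dvd_pow_iff_le_right (Fact.out : p.Prime).one_lt).1 hdvd
    omega
  · rintro h (_ | n)
    · have : Subsingleton (ZMod (p ^ 0)) := by rw [pow_zero]; infer_instance
      rw [minimalPeriod_eq_one_of_subsingleton, pow_zero]
    · exact minimalPeriod_eq_prime_pow (h n).2 (h (n + 1)).1

theorem forall_denseRange_iterate_iff_emultiplicity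
    (hT : ∀ n, Semiconj (PadicInt.toZModPow n) T (t n)) :
    (∀ z, DenseRange fun k : ℕ => T^[k] z) ↔
      ∀ n : ℕ, emultiplicity (p : ℤ_[p]) (T^[p ^ n] 0) = n :=
  (forall_denseRange_iterate_iff_minimalPeriod hT).trans (forall_minimalPeriod_iff_emultiplicity hT)

lemma semiconj_aeval {R S : Type*} [CommRing R] [CommRing S] (φ : R →+* S) (f : ℤ[X]) :
    Semiconj φ (fun x => aeval x f) (fun x => aeval x f) := fun x =>
  (aeval_algHom_apply φ.toIntAlgHom x f).symm

lemma emultiplicity_intCast_padicInt (a : ℤ) :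
    emultiplicity (p : ℤ_[p]) a = emultiplicity (p : ℤ) a := by
  rw [emultiplicity_eq_emultiplicity_iff]
  exact fun n => PadicInt.pow_p_dvd_int_iff n a

theorem forall_denseRange_iterate_aeval_iff (f : ℤ[X]) :
    (∀ z : ℤ_[p], DenseRange fun k : ℕ => (fun w => aeval w f)^[k] z) ↔
      ∀ n : ℕ, emultiplicity (p : ℤ) ((fun x => f.eval x)^[p ^ n] 0) = n := by
  rw [forall_denseRange_iterate_iff_emultiplicity fun n => semiconj_aeval (PadicInt.toZModPow n) f]
  refine forall_congr' fun n => ?_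
  have hcast := (semiconj_aeval (Int.castRingHom ℤ_[p]) f).iterate_right (p ^ n) 0
  simp only [eq_intCast, Int.cast_zero, coe_aeval_eq_eval] at hcast
  rw [← hcast, emultiplicity_intCast_padicInt]

end PadicDynamics

section Lifting

lemma emultiplicity_two_eq_iff_modEq {a : ℤ} {n : ℕ} :
    emultiplicity 2 a = n ↔ a ≡ 2 ^ n [ZMOD 2 ^ (n + 1)] := by
  rw [emultiplicity_eq_coe, Int.modEq_comm, Int.modEq_iff_dvd, pow_succ]
  have hpos : (2 : ℤ) ^ n ≠ 0 := by positivity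
  constructor
  · rintro ⟨⟨b, rfl⟩, hb⟩
    rw [← mul_sub_one, mul_dvd_mul_iff_left hpos]
    rw [mul_dvd_mul_iff_left hpos] at hb
    omega
  · rintro ⟨c, hc⟩
    obtain rfl : a = 2 ^ n * (2 * c + 1) := by linear_combination hc
    refine ⟨dvd_mul_right _ _, fun h => ?_⟩
    rw [mul_dvd_mul_iff_left hpos] at h
    omega

lemma even_of_emultiplicity_two_eq {a : ℤ} {n : ℕ} (hn : n ≠ 0) (h : emultiplicity 2 a = n) :
    Even a :=
  even_iff_two_dvd.2 <| dvd_of_emultiplicity_pos <| by rw [h]; exact_mod_cast hn.bot_lt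

lemma four_dvd_eval_derivative_add_two_mul_sub {R : Type*} [CommRing R] (g : R[X]) (x y : R) :
    4 ∣ (derivative g).eval (x + 2 * y) - (derivative g).eval x := by
  obtain ⟨k, hk⟩ := binomExpansion (derivative g) x (2 * y)
  have hsecond : derivative (derivative g) = 2 • hasseDeriv 2 g := by
    simpa using (congrFun (factorial_smul_hasseDeriv 2) g).symm
  refine ⟨(hasseDeriv 2 g).eval x * y + k * y ^ 2, ?_⟩
  rw [hk, hsecond, eval_smul, nsmul_eq_mul]
  push_cast
  ring

lemma exists_eval_eval_zero_eq_mul {R : Type*} [CommRing R] (g : R[X]) :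
    ∃ k, g.eval (g.eval 0) = g.eval 0 * (1 + (derivative g).eval 0 + k * g.eval 0) := by
  obtain ⟨k, hk⟩ := binomExpansion g 0 (g.eval 0)
  exact ⟨k, by rw [zero_add] at hk; linear_combination hk⟩

variable {g : ℤ[X]}

lemma odd_eval_derivative_zero (h₁ : emultiplicity 2 (g.eval 0) = 1)
    (h₂ : emultiplicity 2 (g.eval (g.eval 0)) = 2) : Odd ((derivative g).eval 0) := by
  obtain ⟨k, hk⟩ := exists_eval_eval_zero_eq_mul g
  have heven : Even (g.eval 0) := even_of_emultiplicity_two_eq one_ne_zero h₁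
  rw [hk, emultiplicity_mul Int.prime_two, h₁] at h₂
  have hfactor : Even (1 + (derivative g).eval 0 + k * g.eval 0) := by
    refine even_iff_two_dvd.2 (dvd_of_emultiplicity_pos (pos_of_ne_zero fun h => ?_))
    rw [h] at h₂
    norm_num at h₂
  simpa [parity_simps, heven] using hfactor

lemma eval_derivative_comp_self_modEq_one (heven : Even (g.eval 0))
    (hodd : Odd ((derivative g).eval 0)) :
    (derivative (g.comp g)).eval 0 ≡ 1 [ZMOD 4] := by
  obtain ⟨y, hy⟩ := heven.two_dvd
  have hperiod : (derivative g).eval (g.eval 0) ≡ (derivative g).eval 0 [ZMOD 4] := by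
    simpa [hy] using
      (Int.modEq_iff_dvd.2 (four_dvd_eval_derivative_add_two_mul_sub g 0 y)).symm
  calc (derivative (g.comp g)).eval 0
      = (derivative g).eval 0 * (derivative g).eval (g.eval 0) := by
        rw [derivative_comp, eval_mul, eval_comp]
    _ ≡ (derivative g).eval 0 * (derivative g).eval 0 [ZMOD 4] := hperiod.mul_left _
    _ = (derivative g).eval 0 ^ 2 := (sq _).symm
    _ ≡ 1 [ZMOD 4] := Int.sq_mod_four_eq_one_of_odd hodd

lemma emultiplicity_two_eval_eval_zero {m : ℕ} (hm : 2 ≤ m) (h : emultiplicity 2 (g.eval 0) = m)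
    (hder : (derivative g).eval 0 ≡ 1 [ZMOD 4]) :
    emultiplicity 2 (g.eval (g.eval 0)) = (m + 1 : ℕ) := by
  obtain ⟨k, hk⟩ := exists_eval_eval_zero_eq_mul g
  have hfour : 4 ∣ g.eval 0 := pow_dvd_of_le_emultiplicity (k := 2) (by rw [h]; exact_mod_cast hm)
  have hfactor : emultiplicity 2 (1 + (derivative g).eval 0 + k * g.eval 0) = (1 : ℕ) :=
    emultiplicity_two_eq_iff_modEq.2 <|
      (hder.add_left 1).add (Int.modEq_zero_iff_dvd.2 (hfour.mul_left k))
  rw [hk, emultiplicity_mul Int.prime_two, h, hfactor, Nat.cast_add]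

lemma iterate_eval_comp_self (g : ℤ[X]) (n : ℕ) :
    (fun x => (g.comp g).eval x)^[n] = (fun x => g.eval x)^[2 * n] := by
  simp only [iterate_mul, eval_comp]
  rfl

lemma emultiplicity_two_iterate_two_pow {m : ℕ} (hm : 2 ≤ m)
    (h : emultiplicity 2 (g.eval 0) = m) (hder : (derivative g).eval 0 ≡ 1 [ZMOD 4]) (n : ℕ) :
    emultiplicity 2 ((fun x => g.eval x)^[2 ^ n] 0) = (m + n : ℕ) := by
  induction n generalizing g m with
  | zero => simpa using h
  | succ n ih =>
    have heven : Even (g.eval 0) := even_of_emultiplicity_two_eq (by omega) h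
    have hodd : Odd ((derivative g).eval 0) :=
      Int.odd_iff.2 (hder.of_mul_left 2 : _ ≡ 1 [ZMOD 2])
    have hval : emultiplicity 2 ((g.comp g).eval 0) = (m + 1 : ℕ) := by
      rw [eval_comp]
      exact emultiplicity_two_eval_eval_zero hm h hder
    rw [pow_succ', ← iterate_eval_comp_self,
      ih (by omega) hval (eval_derivative_comp_self_modEq_one heven hodd), add_assoc, add_comm 1]

theorem forall_emultiplicity_two_iterate_iff (f : ℤ[X]) :
    (∀ n : ℕ, emultiplicity 2 ((fun x => f.eval x)^[2 ^ n] 0) = n) ↔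
      f.eval 0 ≡ 1 [ZMOD 2] ∧ f.eval (f.eval 0) ≡ 2 [ZMOD 4] ∧
        (fun x => f.eval x)^[4] 0 ≡ 4 [ZMOD 8] := by
  have hval {a : ℤ} (n : ℕ) := emultiplicity_two_eq_iff_modEq (a := a) (n := n)
  refine ⟨fun h => ⟨(hval 0).1 (h 0), (hval 1).1 (h 1), (hval 2).1 (h 2)⟩,
    fun ⟨h₀, h₁, h₂⟩ n => ?_⟩
  set g := f.comp f with hg
  have hg₁ : emultiplicity 2 (g.eval 0) = 1 := (hval 1).2 (by rwa [hg, eval_comp])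
  have hg₂ : emultiplicity 2 (g.eval (g.eval 0)) = 2 :=
    (hval 2).2 (by simpa [hg] using h₂)
  have heven : Even (g.eval 0) := even_of_emultiplicity_two_eq one_ne_zero hg₁
  match n with
  | 0 => exact (hval 0).2 h₀
  | 1 => exact (hval 1).2 h₁
  | n + 2 =>
    rw [pow_succ', pow_succ', ← iterate_eval_comp_self, ← iterate_eval_comp_self, add_comm n 2]
    refine emultiplicity_two_iterate_two_pow le_rfl (by rwa [eval_comp])
      (eval_derivative_comp_self_modEq_one heven (odd_eval_derivative_zero hg₁ hg₂)) n

end Lifting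

section Coefficients

lemma sum_coeff_odd (f : ℤ[X]) :
    ∑ i ∈ Finset.range (f.natDegree + 1) with Odd i, f.coeff i = f.coeff 1 + oddCoeffSum f := by
  have hone : f.coeff 1 = ∑ i ∈ Finset.range (f.natDegree + 1), if i = 1 then f.coeff i else 0 := by
    simpa using fun h => coeff_eq_zero_of_natDegree_lt (by omega)
  rw [oddCoeffSum, Finset.sum_filter, Finset.sum_filter, hone, ← Finset.sum_add_distrib]
  refine Finset.sum_congr rfl fun i _ => ?_
  grind

lemma sum_coeff_even (f : ℤ[X]) :
    ∑ i ∈ Finset.range (f.natDegree + 1) with Even i, f.coeff i =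
      f.coeff 0 + f.coeff 2 + evenCoeffSumFour f := by
  have hcoeff (j : ℕ) :
      f.coeff j = ∑ i ∈ Finset.range (f.natDegree + 1), if i = j then f.coeff i else 0 := by
    simpa using fun h => coeff_eq_zero_of_natDegree_lt (by omega)
  rw [evenCoeffSumFour, Finset.sum_filter, Finset.sum_filter, hcoeff 0, hcoeff 2,
    ← Finset.sum_add_distrib, ← Finset.sum_add_distrib]
  refine Finset.sum_congr rfl fun i _ => ?_
  grind

lemma pow_dvd_eval_sub_sum_range {R : Type*} [CommRing R] (f : R[X]) (x : R) (n : ℕ) :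
    x ^ n ∣ f.eval x - ∑ i ∈ Finset.range n, f.coeff i * x ^ i := by
  have hX : X ^ n ∣ f - ∑ i ∈ Finset.range n, C (f.coeff i) * X ^ i :=
    X_pow_dvd_iff.2 fun d hd => by simp [hd]
  simpa [eval_finsetSum] using eval_dvd (x := x) hX

lemma sq_sub_one_dvd_eval_sub {R : Type*} [CommRing R] (f : R[X]) (x : R) :
    x ^ 2 - 1 ∣ f.eval x - (∑ i ∈ Finset.range (f.natDegree + 1) with Even i, f.coeff i +
      (∑ i ∈ Finset.range (f.natDegree + 1) with Odd i, f.coeff i) * x) := by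
  have hpow (j : ℕ) : x ^ 2 - 1 ∣ x ^ (2 * j) - 1 := by
    simpa [pow_mul] using sub_dvd_pow_sub_pow (x ^ 2) 1 j
  rw [eval_eq_sum_range, Finset.sum_filter, Finset.sum_filter, Finset.sum_mul,
    ← Finset.sum_add_distrib, ← Finset.sum_sub_distrib]
  refine Finset.dvd_sum fun i _ => ?_
  obtain ⟨j, rfl | rfl⟩ := i.even_or_odd'
  · have hnot : ¬Odd (2 * j) := Nat.not_odd_iff_even.2 (even_two_mul j)
    simpa [hnot, mul_sub] using (hpow j).mul_left (f.coeff (2 * j))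
  · have := (hpow j).mul_left (f.coeff (2 * j + 1) * x)
    simpa [parity_simps, mul_sub, pow_succ, mul_assoc, mul_comm x] using this

lemma mul_modEq_one_four_iff {a b : ℤ} : a * b ≡ 1 [ZMOD 4] ↔ Odd b ∧ a ≡ b [ZMOD 4] := by
  have ha : a % 4 = 0 ∨ a % 4 = 1 ∨ a % 4 = 2 ∨ a % 4 = 3 := by omega
  have hb : b % 4 = 0 ∨ b % 4 = 1 ∨ b % 4 = 2 ∨ b % 4 = 3 := by omega
  rw [Int.odd_iff, Int.ModEq, Int.ModEq, Int.mul_emod]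
  rcases ha with ha | ha | ha | ha <;> rcases hb with hb | hb | hb | hb <;> rw [ha, hb] <;> omega

variable {f : ℤ[X]} {x : ℤ}

lemma eval_modEq_eight_of_even (f : ℤ[X]) (hx : Even x) :
    f.eval x ≡ f.coeff 0 + f.coeff 1 * x + f.coeff 2 * x ^ 2 [ZMOD 8] := by
  have hcube : 8 ∣ x ^ 3 := pow_dvd_pow_of_dvd hx.two_dvd 3
  have := hcube.trans (pow_dvd_eval_sub_sum_range f x 3)
  simpa [Finset.sum_range_succ] using (Int.modEq_iff_dvd.2 this).symm

lemma eval_modEq_eight_of_odd (f : ℤ[X]) (hx : Odd x) :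
    f.eval x ≡ f.coeff 0 + f.coeff 2 + evenCoeffSumFour f +
      (f.coeff 1 + oddCoeffSum f) * x [ZMOD 8] := by
  rw [← sum_coeff_even, ← sum_coeff_odd]
  exact (Int.modEq_iff_dvd.2 <|
    (Int.eight_dvd_sq_sub_one_of_odd hx).trans (sq_sub_one_dvd_eval_sub f x)).symm

lemma eval_eval_modEq_eight_of_even (h₀ : Odd (f.coeff 0)) (hx : Even x) :
    f.eval (f.eval x) ≡ f.eval (f.eval 0) +
      (f.coeff 1 + oddCoeffSum f) * (f.coeff 1 * x + f.coeff 2 * x ^ 2) [ZMOD 8] := by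
  have hodd : Odd (f.eval x) := by
    have hdvd : 2 ∣ f.eval x - f.coeff 0 :=
      hx.two_dvd.trans <| by simpa [coeff_zero_eq_eval_zero] using sub_dvd_eval_sub x 0 f
    rw [Int.odd_iff] at h₀ ⊢
    omega
  have hzero := eval_modEq_eight_of_odd f h₀
  calc f.eval (f.eval x)
      ≡ f.coeff 0 + f.coeff 2 + evenCoeffSumFour f +
          (f.coeff 1 + oddCoeffSum f) * f.eval x [ZMOD 8] := eval_modEq_eight_of_odd f hodd
    _ ≡ f.coeff 0 + f.coeff 2 + evenCoeffSumFour f + (f.coeff 1 + oddCoeffSum f) *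
          (f.coeff 0 + f.coeff 1 * x + f.coeff 2 * x ^ 2) [ZMOD 8] :=
        ((eval_modEq_eight_of_even f hx).mul_left _).add_left _
    _ = f.coeff 0 + f.coeff 2 + evenCoeffSumFour f + (f.coeff 1 + oddCoeffSum f) * f.coeff 0 +
          (f.coeff 1 + oddCoeffSum f) * (f.coeff 1 * x + f.coeff 2 * x ^ 2) := by ring
    _ ≡ f.eval (f.eval 0) +
          (f.coeff 1 + oddCoeffSum f) * (f.coeff 1 * x + f.coeff 2 * x ^ 2) [ZMOD 8] := by
        rw [← coeff_zero_eq_eval_zero]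
        exact hzero.symm.add_right _

lemma iterate_four_modEq_four_iff (h₀ : Odd (f.coeff 0)) (h₂ : f.eval (f.eval 0) ≡ 2 [ZMOD 4]) :
    (fun x => f.eval x)^[4] 0 ≡ 4 [ZMOD 8] ↔
      f.coeff 1 ≡ 1 [ZMOD 2] ∧ oddCoeffSum f ≡ 2 * f.coeff 2 [ZMOD 4] := by
  set w := (f.coeff 1 + oddCoeffSum f) * (f.coeff 1 + 2 * f.coeff 2) with hw
  obtain ⟨m, hm⟩ : ∃ m, f.eval (f.eval 0) = 2 * (2 * m + 1) := by
    obtain ⟨m, hm⟩ := h₂.symm.dvd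
    exact ⟨m, by linear_combination hm⟩
  have hiter : (fun x => f.eval x)^[4] 0 ≡ 4 + 2 * ((2 * m + 1) * (w - 1)) [ZMOD 8] := by
    refine (eval_eval_modEq_eight_of_even h₀ (x := f.eval (f.eval 0)) ?_).trans ?_
    · exact hm ▸ even_two_mul _
    · rw [hm, Int.modEq_iff_dvd]
      exact ⟨-m - (2 * m + 1) * m * (f.coeff 1 + oddCoeffSum f) * f.coeff 2, by rw [hw]; ring⟩
  have hcoprime : IsCoprime (2 ^ 2) (2 * m + 1) :=
    (Int.isCoprime_two_left.2 (odd_two_mul_add_one m)).pow_left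
  calc (fun x => f.eval x)^[4] 0 ≡ 4 [ZMOD 8]
      ↔ 4 ∣ (2 * m + 1) * (w - 1) := by rw [Int.ModEq, hiter.eq]; omega
    _ ↔ w ≡ 1 [ZMOD 4] := by
        rw [Int.modEq_comm, Int.modEq_iff_dvd]
        exact ⟨hcoprime.dvd_of_dvd_mul_left, fun h => h.mul_left _⟩
    _ ↔ Odd (f.coeff 1 + 2 * f.coeff 2) ∧
          f.coeff 1 + oddCoeffSum f ≡ f.coeff 1 + 2 * f.coeff 2 [ZMOD 4] := mul_modEq_one_four_iff
    _ ↔ f.coeff 1 ≡ 1 [ZMOD 2] ∧ oddCoeffSum f ≡ 2 * f.coeff 2 [ZMOD 4] := by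
        simp only [Int.odd_iff, Int.ModEq]
        omega

lemma eval_eval_zero_modEq_two_iff (h₀ : Odd (f.coeff 0)) (h₁ : f.coeff 1 ≡ 1 [ZMOD 2])
    (hodd : oddCoeffSum f ≡ 2 * f.coeff 2 [ZMOD 4]) :
    f.eval (f.eval 0) ≡ 2 [ZMOD 4] ↔
      evenCoeffSumFour f ≡ f.coeff 1 + f.coeff 2 - 1 [ZMOD 4] := by
  have heval := (eval_modEq_eight_of_odd f h₀).of_dvd (by norm_num : (4 : ℤ) ∣ 8)
  obtain ⟨s, hs⟩ : ∃ s, 1 + f.coeff 1 + oddCoeffSum f = 2 * s :=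
    ⟨(1 + f.coeff 1 + oddCoeffSum f) / 2, by simp only [Int.ModEq] at h₁ hodd; omega⟩
  obtain ⟨r, hr⟩ := h₀
  have hlinear : f.coeff 0 + f.coeff 2 + evenCoeffSumFour f +
      (f.coeff 1 + oddCoeffSum f) * f.coeff 0 =
        1 + f.coeff 1 + oddCoeffSum f + f.coeff 2 + evenCoeffSumFour f + 4 * (r * s) := by
    rw [hr]
    linear_combination 2 * r * hs
  rw [hlinear, coeff_zero_eq_eval_zero] at heval
  simp only [Int.ModEq] at *
  omega

end Coefficients

/-- The dynamical system `(ℤ₂, F)`, where `F : ℤ₂ → ℤ₂` is the evaluation map of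
`f = a₀ + a₁ X + ⋯ + a_t X^t ∈ ℤ[X]` on the `2`-adic integers, is minimal (every forward
orbit is dense) if and only if `a₀ ≡ 1 (mod 2)`, `a₁ ≡ 1 (mod 2)`,
`a₃ + a₅ + ⋯ ≡ 2 a₂ (mod 4)`, and `a₄ + a₆ + ⋯ ≡ a₁ + a₂ - 1 (mod 4)`. -/
theorem minimal_iff_larin_conditions (f : ℤ[X]) :
    (∀ z : ℤ_[2], Dense (Set.range fun k : ℕ => (fun w : ℤ_[2] => aeval w f)^[k] z)) ↔
      (f.coeff 0 ≡ 1 [ZMOD 2] ∧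
       f.coeff 1 ≡ 1 [ZMOD 2] ∧
       oddCoeffSum f ≡ 2 * f.coeff 2 [ZMOD 4] ∧
       evenCoeffSumFour f ≡ f.coeff 1 + f.coeff 2 - 1 [ZMOD 4]) := by
  refine (forall_denseRange_iterate_aeval_iff f).trans <|
    (forall_emultiplicity_two_iterate_iff f).trans ?_
  rw [← coeff_zero_eq_eval_zero]
  refine and_congr_right fun h₀ => ?_
  have hodd : Odd (f.coeff 0) := Int.odd_iff.2 h₀
  rw [coeff_zero_eq_eval_zero]
  constructor
  · rintro ⟨h₂, h₄⟩
    obtain ⟨h₁, hO⟩ := (iterate_four_modEq_four_iff hodd h₂).1 h₄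
    exact ⟨h₁, hO, (eval_eval_zero_modEq_two_iff hodd h₁ hO).1 h₂⟩
  · rintro ⟨h₁, hO, hE⟩
    have h₂ := (eval_eval_zero_modEq_two_iff hodd h₁ hO).2 hE
    exact ⟨h₂, (iterate_four_modEq_four_iff hodd h₂).2 ⟨h₁, hO⟩⟩
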